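/- arXiv:2102.07103 — 3 statements merged into one kernel-verified Lean document; each statement's English description precedes it below -/
import Mathlib

section
/- Let n ≥ 2 and let E ⊆ ℝⁿ be a compact set with nonempty interior. Then there exists a sequence of unit vectors (u_i)_{i≥1} such that, setting E_i = S_{u_i}S_{u_{i-1}}⋯S_{u_1}E, some subsequence (E_{i_j}) converges in the Hausdorff distance to the closed Euclidean ball centered at the origin whose Lebesgue measure equals that of E. -/
open MeasureTheory Filter Metric

/-- Orthogonal projection of `ℝⁿ` onto the hyperplane `u^⊥` through the origin. -/
noncomputable def steinerProj {n : ℕ} (u : EuclideanSpace ℝ (Fin n)) :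
    EuclideanSpace ℝ (Fin n) → EuclideanSpace ℝ (Fin n) :=
  fun z => ((Submodule.orthogonalProjectionOnto (Submodule.span ℝ {u})ᗮ) z : EuclideanSpace ℝ (Fin n))

/-- `ℓ_{E,u}(x')` : the one-dimensional Lebesgue measure of `{t : x' + t u ∈ E}`. -/
noncomputable def steinerLen {n : ℕ} (u : EuclideanSpace ℝ (Fin n))
    (E : Set (EuclideanSpace ℝ (Fin n))) (x' : EuclideanSpace ℝ (Fin n)) : ℝ :=
  (volume {t : ℝ | x' + t • u ∈ E}).toReal

/-- Steiner symmetrization of `E` about the hyperplane `u^⊥`: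
`S_u E = {x' + t u : x' ∈ π_u(E), |t| ≤ ℓ_{E,u}(x')/2}`. -/
noncomputable def steiner {n : ℕ} (u : EuclideanSpace ℝ (Fin n))
    (E : Set (EuclideanSpace ℝ (Fin n))) : Set (EuclideanSpace ℝ (Fin n)) :=
  {x | ∃ x' ∈ steinerProj u '' E, ∃ t : ℝ, |t| ≤ steinerLen u E x' / 2 ∧ x = x' + t • u}

/-- The last standard basis vector `e_n` of `ℝⁿ` (junk value `0` if `n = 0`). -/
noncomputable def lastDir (n : ℕ) : EuclideanSpace ℝ (Fin n) :=
  if h : n = 0 then 0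
  else EuclideanSpace.single ⟨n - 1, Nat.sub_lt (Nat.pos_of_ne_zero h) one_pos⟩ 1

/-- `max_{x ∈ E} |x|` for a (nonempty compact) set `E ⊆ ℝⁿ`. -/
noncomputable def maxNorm {n : ℕ} (E : Set (EuclideanSpace ℝ (Fin n))) : ℝ :=
  sSup ((fun x => ‖x‖) '' E)

/-!
Fix a ball `B` centered at the origin with the volume of a compact set `A`, contained in the ball of
radius `R`. No symmetrization increases the volume of `A \ B`. Averaging over all translations
shows that some translation carries a part of `B \ A` of volume at least a constant multiple of
`|A \ B| ^ 2` into `A \ B`, and symmetrizing in its direction decreases `|A \ B|` by at least that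
amount. Hence, if such a direction is used infinitely often, `|A \ B|` tends to zero.

Smallness in volume becomes smallness in the Hausdorff distance by treating the closed
neighbourhoods of `E` of radii `1 / (m + 1)` simultaneously, each being visited infinitely often.
The `ρ`-neighbourhood of a symmetrization is contained in the symmetrization of the
`ρ`-neighbourhood, so a point of an iterate of `E` outside the ball with the volume of the
`ρ`-neighbourhood of `E` leaves at least the volume of a ball of radius `ρ / 2` outside that ball.
Thus the iterates of `E` are eventually contained in any larger ball than the one with the volume
of `E`, and having that volume they also come close to each of its points.
-/

open scoped ENNReal RealInnerProductSpace Topology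

/-! ### Sections by parallel lines -/

section LineSlice

/-- The section of `A` by the line through `x` with direction `u`, as a set of parameters. The
length `steinerLen u A x` is the real number `(volume (lineSlice u A x)).toReal`. -/
def lineSlice {V : Type*} [AddCommGroup V] [Module ℝ V] (u : V) (A : Set V) (x : V) : Set ℝ :=
  {t | x + t • u ∈ A}

section Module

variable {V : Type*} [AddCommGroup V] [Module ℝ V] {A A' : Set V}

lemma lineSlice_mono (u : V) (h : A ⊆ A') (x : V) : lineSlice u A x ⊆ lineSlice u A' x :=
  fun _ ht => h ht

lemma lineSlice_add_smul (u : V) (A : Set V) (x : V) (c : ℝ) :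
    lineSlice u A (x + c • u) = (c + ·) ⁻¹' lineSlice u A x := by
  ext t
  simp only [lineSlice, Set.mem_ofPred_eq, Set.mem_preimage, add_smul, add_assoc]

lemma volume_lineSlice_add_smul (u : V) (A : Set V) (x : V) (c : ℝ) :
    volume (lineSlice u A (x + c • u)) = volume (lineSlice u A x) := by
  rw [lineSlice_add_smul, measure_preimage_add]

lemma lineSlice_add_smul_nonempty_iff (u : V) (A : Set V) (x : V) (c : ℝ) :
    (lineSlice u A (x + c • u)).Nonempty ↔ (lineSlice u A x).Nonempty := by
  rw [lineSlice_add_smul]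
  exact (AddGroup.addLeft_bijective c).surjective.nonempty_preimage

end Module

section Normed

variable {V : Type*} [NormedAddCommGroup V] [NormedSpace ℝ V] {u : V} {A : Set V}

lemma isometry_add_smul_of_norm_eq_one (hu : ‖u‖ = 1) (x : V) :
    Isometry fun t : ℝ => x + t • u :=
  Isometry.of_dist_eq fun s t => by
    rw [dist_add_left, dist_eq_norm, ← sub_smul, norm_smul, hu, mul_one, ← dist_eq_norm]

lemma isCompact_lineSlice (hu : ‖u‖ = 1) (hA : IsCompact A) (x : V) :
    IsCompact (lineSlice u A x) :=
  (isometry_add_smul_of_norm_eq_one hu x).isClosedEmbedding.isCompact_preimage hA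

lemma volume_lineSlice_ne_top (hu : ‖u‖ = 1) (hA : Bornology.IsBounded A) (x : V) :
    volume (lineSlice u A x) ≠ ∞ :=
  ((isometry_add_smul_of_norm_eq_one hu x).antilipschitz.isBounded_preimage hA).measure_lt_top.ne

lemma lineSlice_subset_lineSlice_cthickening {x y : V} {δ : ℝ} (hxy : dist y x ≤ δ) :
    lineSlice u A y ⊆ lineSlice u (cthickening δ A) x := fun t ht =>
  mem_cthickening_of_dist_le _ _ _ _ ht <| by rwa [dist_add_right, dist_comm]

lemma tendsto_volume_lineSlice_cthickening (hu : ‖u‖ = 1) (hA : IsCompact A) (x : V) :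
    Tendsto (fun δ => volume (lineSlice u (cthickening δ A) x)) (𝓝 0)
      (𝓝 (volume (lineSlice u A x))) := by
  borelize V
  have hmap : ∀ S : Set V, IsClosed S →
      (volume.map fun t : ℝ => x + t • u) S = volume (lineSlice u S x) := fun S hS =>
    Measure.map_apply (isometry_add_smul_of_norm_eq_one hu x).continuous.measurable
      hS.measurableSet
  have hlim := tendsto_measure_cthickening_of_isClosed
    (μ := volume.map fun t : ℝ => x + t • u) (s := A)
    ⟨1, one_pos, by
      rw [hmap _ isClosed_cthickening]
      exact volume_lineSlice_ne_top hu hA.isBounded.cthickening x⟩ hA.isClosed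
  simpa only [hmap _ isClosed_cthickening, hmap _ hA.isClosed] using hlim

end Normed

section InnerProductSpace

variable {V : Type*} [NormedAddCommGroup V] [InnerProductSpace ℝ V] {u : V}

lemma inner_add_smul_of_norm_eq_one (hu : ‖u‖ = 1) (x : V) (t : ℝ) :
    ⟪u, x + t • u⟫ = ⟪u, x⟫ + t := by
  rw [inner_add_right, inner_smul_right, inner_self_eq_one_of_norm_eq_one hu, mul_one]

lemma norm_add_smul_sq_of_norm_eq_one (hu : ‖u‖ = 1) (x : V) (t : ℝ) :
    ‖x + t • u‖ ^ 2 = ‖x‖ ^ 2 - ⟪u, x⟫ ^ 2 + (⟪u, x⟫ + t) ^ 2 := by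
  rw [norm_add_sq_real, inner_smul_right, norm_smul, hu, real_inner_comm, Real.norm_eq_abs,
    mul_one, sq_abs]
  ring

lemma lineSlice_closedBall_subset (hu : ‖u‖ = 1) (x : V) (R : ℝ) :
    lineSlice u (closedBall 0 R) x ⊆
      closedBall (-⟪u, x⟫) (√(R ^ 2 - (‖x‖ ^ 2 - ⟪u, x⟫ ^ 2))) := by
  intro t ht
  have hnorm : ‖x + t • u‖ ^ 2 ≤ R ^ 2 := by
    gcongr
    exact mem_closedBall_zero_iff.1 ht
  rw [norm_add_smul_sq_of_norm_eq_one hu] at hnorm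
  rw [mem_closedBall, Real.dist_eq, sub_neg_eq_add, add_comm]
  exact Real.abs_le_sqrt (by linarith)

lemma cthickening_lineSlice_subset (hu : ‖u‖ = 1) {E : Set V} (hE : IsCompact E) (x : V)
    {z : V} (hz : ⟪u, z⟫ = 0) {w ρ : ℝ} (hw : 0 ≤ w) (hρ : 0 ≤ ρ)
    (hwz : ‖z‖ ^ 2 + w ^ 2 ≤ ρ ^ 2) :
    cthickening w (lineSlice u E x) ⊆ lineSlice u (cthickening ρ E) (x + z) := by
  rw [(isCompact_lineSlice hu hE x).cthickening_eq_biUnion_closedBall hw]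
  refine Set.iUnion₂_subset fun k hk t ht => mem_cthickening_of_dist_le _ _ _ _ hk ?_
  have hdiff : x + z + t • u - (x + k • u) = z + (t - k) • u := by module
  have htk : (t - k) ^ 2 ≤ w ^ 2 := sq_le_sq.2 (by rwa [abs_of_nonneg hw, ← Real.dist_eq])
  rw [dist_eq_norm, hdiff]
  refine le_of_sq_le_sq ?_ hρ
  rw [norm_add_smul_sq_of_norm_eq_one hu, hz]
  linarith

variable [MeasurableSpace V] [BorelSpace V] [SecondCountableTopology V]
  {μ : Measure V} [SFinite μ] [μ.IsAddRightInvariant]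

-- Every line parallel to `u` meets the slab `0 ≤ ⟪u, x⟫ ≤ 1` in a segment of length one, so the
-- slab can replace the hyperplane `uᗮ` in the usual Fubini formula.
lemma measure_eq_setLIntegral_volume_lineSlice (hu : ‖u‖ = 1) {A : Set V}
    (hA : MeasurableSet A) :
    μ A = ∫⁻ x in {x | ⟪u, x⟫ ∈ Set.Icc (0 : ℝ) 1}, volume (lineSlice u A x) ∂μ := by
  set a : V → ℝ≥0∞ := A.indicator 1
  set b : ℝ → ℝ≥0∞ := (Set.Icc (0 : ℝ) 1).indicator 1
  have ha : Measurable a := measurable_one.indicator hA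
  have hb : Measurable b := measurable_one.indicator measurableSet_Icc
  have hslab : MeasurableSet {x : V | ⟪u, x⟫ ∈ Set.Icc (0 : ℝ) 1} :=
    (by fun_prop : Measurable fun x : V => ⟪u, x⟫) measurableSet_Icc
  calc μ A = ∫⁻ x, a x ∂μ := (lintegral_indicator_one hA).symm
    _ = ∫⁻ x, (∫⁻ t : ℝ, a x * b (⟪u, x⟫ - t)) ∂μ := by
      refine lintegral_congr fun x => ?_
      rw [lintegral_const_mul _ (by fun_prop), lintegral_sub_left_eq_self b,
        lintegral_indicator_one measurableSet_Icc, Real.volume_Icc]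
      simp only [sub_zero, ENNReal.ofReal_one, mul_one]
    _ = ∫⁻ t : ℝ, (∫⁻ x, a x * b (⟪u, x⟫ - t) ∂μ) :=
      lintegral_lintegral_swap (by fun_prop)
    _ = ∫⁻ t : ℝ, (∫⁻ x, a (x + t • u) * b ⟪u, x⟫ ∂μ) := by
      refine lintegral_congr fun t => ?_
      rw [← lintegral_add_right_eq_self _ (t • u)]
      simp only [inner_add_smul_of_norm_eq_one hu, add_sub_cancel_right]
    _ = ∫⁻ x, (∫⁻ t : ℝ, a (x + t • u) * b ⟪u, x⟫) ∂μ :=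
      lintegral_lintegral_swap (by fun_prop)
    _ = ∫⁻ x, b ⟪u, x⟫ * volume (lineSlice u A x) ∂μ := by
      refine lintegral_congr fun x => ?_
      have hslice : MeasurableSet (lineSlice u A x) :=
        (by fun_prop : Measurable fun t : ℝ => x + t • u) hA
      rw [lintegral_mul_const _ (by fun_prop), mul_comm, ← lintegral_indicator_one hslice]
      rfl
    _ = ∫⁻ x in {x | ⟪u, x⟫ ∈ Set.Icc (0 : ℝ) 1}, volume (lineSlice u A x) ∂μ := by
      rw [← lintegral_indicator hslab]
      refine lintegral_congr fun x => ?_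
      simp only [b, Set.indicator_apply, Set.mem_ofPred_eq, Pi.one_apply, ite_mul, one_mul,
        zero_mul]

lemma measure_le_of_volume_lineSlice_le (hu : ‖u‖ = 1) {A A' : Set V} (hA : MeasurableSet A)
    (hA' : MeasurableSet A') (h : ∀ x, volume (lineSlice u A x) ≤ volume (lineSlice u A' x)) :
    μ A ≤ μ A' := by
  rw [measure_eq_setLIntegral_volume_lineSlice hu hA,
    measure_eq_setLIntegral_volume_lineSlice hu hA']
  exact lintegral_mono h

end InnerProductSpace

end LineSlice

/-! ### Steiner symmetrization -/

lemma volume_add_le_volume_cthickening {K : Set ℝ} (hK : IsCompact K) (hne : K.Nonempty) {w : ℝ}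
    (hw : 0 ≤ w) : volume K + ENNReal.ofReal (2 * w) ≤ volume (cthickening w K) := by
  have hleft : Disjoint K (Set.Ico (sInf K - w) (sInf K)) :=
    Set.disjoint_left.2 fun k hk hk' => (csInf_le hK.bddBelow hk).not_gt hk'.2
  have hright : Disjoint (K ∪ Set.Ico (sInf K - w) (sInf K)) (Set.Ioc (sSup K) (sSup K + w)) := by
    refine Set.disjoint_left.2 ?_
    rintro k (hk | hk) hk'
    · exact (le_csSup hK.bddAbove hk).not_gt hk'.1
    · exact (le_csSup hK.bddAbove (hK.sInf_mem hne)).not_gt (hk'.1.trans hk.2)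
  calc volume K + ENNReal.ofReal (2 * w)
      = volume (K ∪ Set.Ico (sInf K - w) (sInf K) ∪ Set.Ioc (sSup K) (sSup K + w)) := by
        rw [measure_union hright measurableSet_Ioc, measure_union hleft measurableSet_Ico,
          Real.volume_Ico, Real.volume_Ioc, add_assoc, ← ENNReal.ofReal_add (by simpa) (by simpa)]
        ring_nf
    _ ≤ volume (cthickening w K) := by
        refine measure_mono (Set.union_subset (Set.union_subset
          (self_subset_cthickening K) fun k hk => ?_) fun k hk => ?_)
        · refine mem_cthickening_of_dist_le _ _ _ _ (hK.sInf_mem hne) (abs_le.2 ⟨?_, ?_⟩) <;>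
            linarith [hk.1, hk.2]
        · refine mem_cthickening_of_dist_le _ _ _ _ (hK.sSup_mem hne) (abs_le.2 ⟨?_, ?_⟩) <;>
            linarith [hk.1, hk.2]

section Steiner

variable {n : ℕ} {u x : EuclideanSpace ℝ (Fin n)} {A A' E : Set (EuclideanSpace ℝ (Fin n))}

lemma steinerProj_eq_sub_smul (hu : ‖u‖ = 1) (x : EuclideanSpace ℝ (Fin n)) :
    steinerProj u x = x - ⟪u, x⟫ • u := by
  simp [steinerProj, Submodule.starProjection_unit_singleton ℝ hu]

lemma continuous_steinerProj (u : EuclideanSpace ℝ (Fin n)) : Continuous (steinerProj u) :=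
  continuous_subtype_val.comp (ContinuousLinearMap.continuous _)

lemma steinerLen_sub_smul (u : EuclideanSpace ℝ (Fin n)) (A : Set (EuclideanSpace ℝ (Fin n)))
    (x : EuclideanSpace ℝ (Fin n)) (c : ℝ) : steinerLen u A (x - c • u) = steinerLen u A x := by
  rw [sub_eq_add_neg, ← neg_smul]
  exact congrArg ENNReal.toReal (volume_lineSlice_add_smul u A x (-c))

lemma steinerProj_mem_image_iff (hu : ‖u‖ = 1) :
    steinerProj u x ∈ steinerProj u '' A ↔ (lineSlice u A x).Nonempty := by
  simp only [Set.mem_image, steinerProj_eq_sub_smul hu]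
  constructor
  · rintro ⟨y, hy, hyx⟩
    have hline : x + (⟪u, y⟫ - ⟪u, x⟫) • u = y := by
      rw [sub_smul, add_sub_left_comm, ← hyx, add_sub_cancel]
    exact ⟨⟪u, y⟫ - ⟪u, x⟫, by rwa [lineSlice, Set.mem_ofPred_eq, hline]⟩
  · rintro ⟨s, hs⟩
    refine ⟨_, hs, ?_⟩
    rw [inner_add_smul_of_norm_eq_one hu]
    module

lemma mem_steiner_iff (hu : ‖u‖ = 1) :
    x ∈ steiner u A ↔ (lineSlice u A x).Nonempty ∧ 2 * |⟪u, x⟫| ≤ steinerLen u A x := by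
  rw [← steinerProj_mem_image_iff hu]
  constructor
  · rintro ⟨_, ⟨y, hy, rfl⟩, t, ht, rfl⟩
    have hinner : ⟪u, steinerProj u y + t • u⟫ = t := by
      rw [inner_add_smul_of_norm_eq_one hu, steinerProj_eq_sub_smul hu, sub_eq_add_neg,
        ← neg_smul, inner_add_smul_of_norm_eq_one hu]
      ring
    have hproj : steinerProj u (steinerProj u y + t • u) = steinerProj u y := by
      rw [steinerProj_eq_sub_smul hu, hinner, add_sub_cancel_right]
    rw [hproj, hinner, ← steinerLen_sub_smul u A _ t, add_sub_cancel_right]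
    exact ⟨Set.mem_image_of_mem _ hy, by linarith⟩
  · rintro ⟨hmem, hlen⟩
    refine ⟨steinerProj u x, hmem, ⟪u, x⟫, ?_, ?_⟩ <;> rw [steinerProj_eq_sub_smul hu]
    · rw [steinerLen_sub_smul]
      linarith
    · rw [sub_add_cancel]

lemma lineSlice_steiner (hu : ‖u‖ = 1) (hx : (lineSlice u A x).Nonempty) :
    lineSlice u (steiner u A) x = closedBall (-⟪u, x⟫) (steinerLen u A x / 2) := by
  ext t
  have hlen : steinerLen u A (x + t • u) = steinerLen u A x :=
    congrArg ENNReal.toReal (volume_lineSlice_add_smul u A x t)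
  rw [lineSlice, Set.mem_ofPred_eq, mem_steiner_iff hu, lineSlice_add_smul_nonempty_iff, hlen,
    inner_add_smul_of_norm_eq_one hu, mem_closedBall, Real.dist_eq, sub_neg_eq_add, add_comm t,
    le_div_iff₀' two_pos, and_iff_right hx]

lemma volume_lineSlice_steiner (hu : ‖u‖ = 1) (hA : Bornology.IsBounded A)
    (x : EuclideanSpace ℝ (Fin n)) :
    volume (lineSlice u (steiner u A) x) = volume (lineSlice u A x) := by
  obtain hx | hx := (lineSlice u A x).eq_empty_or_nonempty
  · have hempty : lineSlice u (steiner u A) x = ∅ :=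
      Set.eq_empty_of_forall_notMem fun t ht => Set.not_nonempty_iff_eq_empty.2 hx <|
        (lineSlice_add_smul_nonempty_iff u A x t).1 ((mem_steiner_iff hu).1 ht).1
    rw [hx, hempty]
  · rw [lineSlice_steiner hu hx, Real.volume_closedBall, mul_div_cancel₀ _ two_ne_zero]
    exact ENNReal.ofReal_toReal (volume_lineSlice_ne_top hu hA x)

lemma steiner_subset_steiner (hu : ‖u‖ = 1) (hA' : Bornology.IsBounded A')
    (hne : ∀ x, (lineSlice u A x).Nonempty → (lineSlice u A' x).Nonempty)
    (hvol : ∀ x, volume (lineSlice u A x) ≤ volume (lineSlice u A' x)) :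
    steiner u A ⊆ steiner u A' := fun x hx => by
  obtain ⟨hAx, hlen⟩ := (mem_steiner_iff hu).1 hx
  exact (mem_steiner_iff hu).2
    ⟨hne x hAx, hlen.trans (ENNReal.toReal_mono (volume_lineSlice_ne_top hu hA' x) (hvol x))⟩

lemma steiner_mono (hu : ‖u‖ = 1) (hA' : Bornology.IsBounded A') (h : A ⊆ A') :
    steiner u A ⊆ steiner u A' :=
  steiner_subset_steiner hu hA' (fun x hx => hx.mono (lineSlice_mono u h x))
    fun x => measure_mono (lineSlice_mono u h x)

lemma steiner_closedBall_subset (hu : ‖u‖ = 1) (R : ℝ) :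
    steiner u (closedBall 0 R) ⊆ closedBall 0 R := fun x hx => by
  obtain ⟨⟨s, hs⟩, hlen⟩ := (mem_steiner_iff hu).1 hx
  have hR : 0 ≤ R := nonempty_closedBall.1 ⟨_, hs⟩
  have hs_sq : ‖x + s • u‖ ^ 2 ≤ R ^ 2 := by
    gcongr
    exact mem_closedBall_zero_iff.1 hs
  rw [norm_add_smul_sq_of_norm_eq_one hu] at hs_sq
  have hlen_le : steinerLen u (closedBall 0 R) x ≤ 2 * √(R ^ 2 - (‖x‖ ^ 2 - ⟪u, x⟫ ^ 2)) := by
    refine ENNReal.toReal_le_of_le_ofReal (by positivity) ?_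
    rw [← Real.volume_closedBall]
    exact measure_mono (lineSlice_closedBall_subset hu x R)
  have hinner : |⟪u, x⟫| ^ 2 ≤ R ^ 2 - (‖x‖ ^ 2 - ⟪u, x⟫ ^ 2) :=
    (Real.le_sqrt (abs_nonneg _) (by nlinarith [sq_nonneg (⟪u, x⟫ + s)])).1 (by linarith)
  rw [sq_abs] at hinner
  exact mem_closedBall_zero_iff.2 (le_of_sq_le_sq (by linarith) hR)

lemma steiner_subset_closedBall (hu : ‖u‖ = 1) {R : ℝ} (hA : A ⊆ closedBall 0 R) :
    steiner u A ⊆ closedBall 0 R :=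
  (steiner_mono hu isBounded_closedBall hA).trans (steiner_closedBall_subset hu R)

lemma upperSemicontinuous_steinerLen (hu : ‖u‖ = 1) (hA : IsCompact A) :
    UpperSemicontinuous (steinerLen u A) := by
  intro x y hy
  have hfin : ∀ δ, volume (lineSlice u (cthickening δ A) x) ≠ ∞ := fun δ =>
    volume_lineSlice_ne_top hu hA.isBounded.cthickening x
  have hlim : Tendsto (fun δ => steinerLen u (cthickening δ A) x) (𝓝[>] 0)
      (𝓝 (steinerLen u A x)) :=
    ((ENNReal.tendsto_toReal (volume_lineSlice_ne_top hu hA.isBounded x)).comp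
      (tendsto_volume_lineSlice_cthickening hu hA x)).mono_left nhdsWithin_le_nhds
  obtain ⟨δ, hδy, hδ⟩ := ((hlim.eventually_lt_const hy).and self_mem_nhdsWithin).exists
  filter_upwards [closedBall_mem_nhds x hδ] with z hz
  exact (ENNReal.toReal_mono (hfin δ)
    (measure_mono (lineSlice_subset_lineSlice_cthickening hz))).trans_lt hδy

lemma isCompact_steiner (hu : ‖u‖ = 1) (hA : IsCompact A) : IsCompact (steiner u A) := by
  obtain ⟨R, hR⟩ := hA.isBounded.subset_closedBall 0
  refine (isCompact_closedBall 0 R).of_isClosed_subset ?_ (steiner_subset_closedBall hu hR)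
  have hdecomp : steiner u A = steinerProj u ⁻¹' (steinerProj u '' A) ∩
      (fun x => steinerLen u A x + -(2 * |⟪u, x⟫|)) ⁻¹' Set.Ici 0 := by
    ext x
    rw [mem_steiner_iff hu, ← steinerProj_mem_image_iff hu, Set.mem_inter_iff, Set.mem_preimage,
      Set.mem_preimage, Set.mem_Ici, ← sub_eq_add_neg, sub_nonneg]
  have hcont : Continuous fun x : EuclideanSpace ℝ (Fin n) => -(2 * |⟪u, x⟫|) := by fun_prop
  rw [hdecomp]
  exact ((hA.image (continuous_steinerProj u)).isClosed.preimage (continuous_steinerProj u)).inter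
    (((upperSemicontinuous_steinerLen hu hA).add hcont.upperSemicontinuous).isClosed_preimage 0)

lemma volume_steiner (hu : ‖u‖ = 1) (hA : IsCompact A) : volume (steiner u A) = volume A := by
  rw [measure_eq_setLIntegral_volume_lineSlice hu (isCompact_steiner hu hA).measurableSet,
    measure_eq_setLIntegral_volume_lineSlice hu hA.measurableSet]
  exact lintegral_congr fun x => volume_lineSlice_steiner hu hA.isBounded x

lemma nonempty_steiner (u : EuclideanSpace ℝ (Fin n)) (hA : A.Nonempty) :
    (steiner u A).Nonempty := by
  obtain ⟨a, ha⟩ := hA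
  refine ⟨steinerProj u a, steinerProj u a, Set.mem_image_of_mem _ ha, 0, ?_, by simp⟩
  rw [abs_zero, steinerLen]
  positivity

lemma steinerLen_add_le_steinerLen_cthickening (hu : ‖u‖ = 1) (hE : IsCompact E)
    (hx : (lineSlice u E x).Nonempty) {z : EuclideanSpace ℝ (Fin n)} (hz : ⟪u, z⟫ = 0) {w ρ : ℝ}
    (hw : 0 ≤ w) (hρ : 0 ≤ ρ) (hwz : ‖z‖ ^ 2 + w ^ 2 ≤ ρ ^ 2) :
    steinerLen u E x + 2 * w ≤ steinerLen u (cthickening ρ E) (x + z) := by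
  have hvol := (volume_add_le_volume_cthickening (isCompact_lineSlice hu hE x) hx hw).trans
    (measure_mono (cthickening_lineSlice_subset hu hE x hz hw hρ hwz))
  have hlen := ENNReal.toReal_mono
    (volume_lineSlice_ne_top hu hE.isBounded.cthickening (x + z)) hvol
  rwa [ENNReal.toReal_add (volume_lineSlice_ne_top hu hE.isBounded x) ENNReal.ofReal_ne_top,
    ENNReal.toReal_ofReal (by positivity)] at hlen

lemma cthickening_steiner_subset (hu : ‖u‖ = 1) (hE : IsCompact E) {ρ : ℝ} (hρ : 0 ≤ ρ) :
    cthickening ρ (steiner u E) ⊆ steiner u (cthickening ρ E) := by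
  rw [(isCompact_steiner hu hE).cthickening_eq_biUnion_closedBall hρ]
  refine Set.iUnion₂_subset fun x hx y hy => ?_
  obtain ⟨hEx, hlen⟩ := (mem_steiner_iff hu).1 hx
  obtain ⟨z, rfl⟩ : ∃ z, x + z = y := ⟨y - x, add_sub_cancel x y⟩
  have hz : ‖z‖ ^ 2 ≤ ρ ^ 2 := by
    gcongr
    simpa only [mem_closedBall, dist_self_add_left] using hy
  set τ := ⟪u, z⟫
  set z' := z - τ • u
  have hz' : ⟪u, z'⟫ = 0 := by
    rw [show z' = z + (-τ) • u by module, inner_add_smul_of_norm_eq_one hu, add_neg_cancel]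
  have hz_sq : ‖z'‖ ^ 2 + τ ^ 2 = ‖z‖ ^ 2 := by
    rw [show z = z' + τ • u by module, norm_add_smul_sq_of_norm_eq_one hu, hz']
    ring
  set w := √(ρ ^ 2 - ‖z'‖ ^ 2)
  have hτw : |τ| ≤ w := Real.abs_le_sqrt (by linarith)
  have hwz : ‖z'‖ ^ 2 + w ^ 2 ≤ ρ ^ 2 := by
    rw [Real.sq_sqrt (by nlinarith [sq_nonneg τ])]
    linarith
  have hy : x + z' = x + z - τ • u := (add_sub_assoc x z _).symm
  have hgrow := steinerLen_add_le_steinerLen_cthickening hu hE hEx hz' (Real.sqrt_nonneg _) hρ hwz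
  rw [hy, steinerLen_sub_smul] at hgrow
  refine (mem_steiner_iff hu).2 ⟨?_, ?_⟩
  · obtain ⟨k, hk⟩ := hEx
    rw [← sub_add_cancel (x + z) (τ • u), ← hy, lineSlice_add_smul_nonempty_iff]
    exact ⟨k, cthickening_lineSlice_subset hu hE x hz' (Real.sqrt_nonneg _) hρ hwz
      (self_subset_cthickening _ hk)⟩
  · rw [inner_add_right]
    linarith [abs_add_le ⟪u, x⟫ τ]

end Steiner

/-! ### The gain of a well-chosen symmetrization -/

section Translation

variable {G : Type*} [AddGroup G] [MeasurableSpace G] [MeasurableAdd₂ G] {μ : Measure G}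
  [SFinite μ] [μ.IsAddLeftInvariant] {P Q D : Set G}

lemma lintegral_measure_inter_preimage_add (hP : MeasurableSet P) (hQ : MeasurableSet Q) :
    ∫⁻ v, μ (Q ∩ (· + v) ⁻¹' P) ∂μ = μ Q * μ P := by
  set p : G → ℝ≥0∞ := P.indicator 1
  set q : G → ℝ≥0∞ := Q.indicator 1
  have hp : Measurable p := measurable_one.indicator hP
  have hq : Measurable q := measurable_one.indicator hQ
  calc ∫⁻ v, μ (Q ∩ (· + v) ⁻¹' P) ∂μ = ∫⁻ v, ∫⁻ y, q y * p (y + v) ∂μ ∂μ := by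
        refine lintegral_congr fun v => ?_
        rw [← lintegral_indicator_one (hQ.inter (measurable_add_const v hP)),
          Set.inter_indicator_one]
        rfl
    _ = ∫⁻ y, ∫⁻ v, q y * p (y + v) ∂μ ∂μ := lintegral_lintegral_swap (by fun_prop)
    _ = ∫⁻ y, q y * μ P ∂μ := by
        refine lintegral_congr fun y => ?_
        rw [lintegral_const_mul _ (by fun_prop), lintegral_add_left_eq_self p,
          lintegral_indicator_one hP]
    _ = μ Q * μ P := by
        rw [lintegral_mul_const _ hq, lintegral_indicator_one hQ]

lemma exists_mul_measure_le_measure_inter_preimage_add_mul (hP : MeasurableSet P)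
    (hQ : MeasurableSet Q) (hD : MeasurableSet D) (hPQ : μ Q * μ P ≠ ∞) (hDfin : μ D ≠ ∞)
    (hsub : ∀ y ∈ Q, ∀ v, y + v ∈ P → v ∈ D) :
    ∃ v, μ Q * μ P ≤ μ (Q ∩ (· + v) ⁻¹' P) * μ D := by
  have hint : ∫⁻ v in D, μ (Q ∩ (· + v) ⁻¹' P) ∂μ = μ Q * μ P := by
    rw [← lintegral_measure_inter_preimage_add hP hQ]
    refine setLIntegral_eq_of_support_subset fun v hv => ?_
    obtain ⟨y, hyQ, hyP⟩ := nonempty_of_measure_ne_zero hv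
    exact hsub y hyQ v hyP
  by_cases hD0 : μ D = 0
  · refine ⟨0, ?_⟩
    rw [← hint, setLIntegral_measure_zero _ _ hD0]
    exact zero_le
  · obtain ⟨v, -, hv⟩ := exists_setLAverage_le hD0 hD.nullMeasurableSet (hint ▸ hPQ)
    rw [setLAverage_eq, hint, ENNReal.div_le_iff hD0 hDfin] at hv
    exact ⟨v, hv⟩

end Translation

lemma exists_norm_eq_one_smul_eq {V : Type*} [NormedAddCommGroup V] [NormedSpace ℝ V]
    [Nontrivial V] (v : V) : ∃ u : V, ‖u‖ = 1 ∧ ‖v‖ • u = v := by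
  obtain rfl | hv := eq_or_ne v 0
  · obtain ⟨u, hu⟩ := exists_norm_eq V zero_le_one
    exact ⟨u, hu, by rw [norm_zero, zero_smul]⟩
  · exact ⟨‖v‖⁻¹ • v, norm_smul_inv_norm hv, smul_inv_smul₀ (norm_ne_zero_iff.2 hv) v⟩

section Gain

variable {n : ℕ} {u : EuclideanSpace ℝ (Fin n)} {A B W : Set (EuclideanSpace ℝ (Fin n))} {s c : ℝ}

lemma steiner_inter_union_subset (hu : ‖u‖ = 1) (hA : Bornology.IsBounded A)
    (hB : MeasurableSet B) (hWA : ∀ w ∈ W, w + c • u ∈ A \ B) :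
    steiner u (A ∩ B ∪ W) ⊆ steiner u A := by
  refine steiner_subset_steiner hu hA ?_ fun x => ?_
  · rintro x ⟨t, ht | ht⟩
    · exact ⟨t, ht.1⟩
    · exact (lineSlice_add_smul_nonempty_iff u A x c).1
        ⟨t, by simpa only [lineSlice, Set.mem_ofPred_eq, add_right_comm] using (hWA _ ht).1⟩
  · have hBx : MeasurableSet (lineSlice u B x) :=
      (by fun_prop : Measurable fun t : ℝ => x + t • u) hB
    have hWx : volume (lineSlice u W x) ≤ volume (lineSlice u A x \ lineSlice u B x) := by
      rw [← measure_preimage_add_right volume c (_ \ _)]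
      refine measure_mono fun t ht => ?_
      have hmem := hWA _ ht
      rwa [add_assoc, ← add_smul] at hmem
    calc volume (lineSlice u (A ∩ B ∪ W) x)
        ≤ volume (lineSlice u A x ∩ lineSlice u B x) + volume (lineSlice u W x) :=
          measure_union_le _ _
      _ ≤ volume (lineSlice u A x ∩ lineSlice u B x) +
            volume (lineSlice u A x \ lineSlice u B x) := by gcongr
      _ = volume (lineSlice u A x) := measure_inter_add_sdiff _ hBx

lemma volume_inter_add_le_volume_steiner_inter (hu : ‖u‖ = 1) (hA : IsCompact A)
    (hW : MeasurableSet W) (hWB : W ⊆ closedBall 0 s \ A)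
    (hWA : ∀ w ∈ W, w + c • u ∈ A \ closedBall 0 s) :
    volume (A ∩ closedBall 0 s) + volume W ≤ volume (steiner u A ∩ closedBall 0 s) := by
  have hdisj : Disjoint (A ∩ closedBall 0 s) W :=
    Set.disjoint_left.2 fun x hx hxW => (hWB hxW).2 hx.1
  have hball : A ∩ closedBall 0 s ∪ W ⊆ closedBall 0 s :=
    Set.union_subset Set.inter_subset_right fun x hx => (hWB hx).1
  have hsteiner : steiner u (A ∩ closedBall 0 s ∪ W) ⊆ steiner u A ∩ closedBall 0 s :=
    Set.subset_inter (steiner_inter_union_subset hu hA.isBounded measurableSet_closedBall hWA)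
      (steiner_subset_closedBall hu hball)
  rw [← measure_union hdisj hW]
  refine measure_le_of_volume_lineSlice_le hu
    ((hA.measurableSet.inter measurableSet_closedBall).union hW)
    ((isCompact_steiner hu hA).measurableSet.inter measurableSet_closedBall) fun x => ?_
  rw [← volume_lineSlice_steiner hu (isBounded_closedBall.subset hball)]
  exact measure_mono (lineSlice_mono u hsteiner x)

lemma volume_steiner_sdiff_add_le (hu : ‖u‖ = 1) (hA : IsCompact A)
    (hW : MeasurableSet W) (hWB : W ⊆ closedBall 0 s \ A)
    (hWA : ∀ w ∈ W, w + c • u ∈ A \ closedBall 0 s) :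
    volume (steiner u A \ closedBall 0 s) + volume W ≤ volume (A \ closedBall 0 s) := by
  have hfin : volume (A ∩ closedBall 0 s) ≠ ∞ :=
    measure_ne_top_of_subset Set.inter_subset_left hA.measure_lt_top.ne
  refine (ENNReal.add_le_add_iff_left hfin).1 ?_
  calc volume (A ∩ closedBall 0 s) + (volume (steiner u A \ closedBall 0 s) + volume W)
      = volume (A ∩ closedBall 0 s) + volume W + volume (steiner u A \ closedBall 0 s) := by
        rw [add_assoc, add_comm (volume W)]
    _ ≤ volume (steiner u A ∩ closedBall 0 s) + volume (steiner u A \ closedBall 0 s) := by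
        gcongr
        exact volume_inter_add_le_volume_steiner_inter hu hA hW hWB hWA
    _ = volume (A ∩ closedBall 0 s) + volume (A \ closedBall 0 s) := by
        rw [measure_inter_add_sdiff _ measurableSet_closedBall,
          measure_inter_add_sdiff _ measurableSet_closedBall, volume_steiner hu hA]

lemma volume_steiner_sdiff_le (hu : ‖u‖ = 1) (hA : IsCompact A) (s : ℝ) :
    volume (steiner u A \ closedBall 0 s) ≤ volume (A \ closedBall 0 s) := by
  simpa using volume_steiner_sdiff_add_le (W := ∅) (c := 0) (s := s) hu hA
    MeasurableSet.empty (Set.empty_subset _) (by simp)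

-- On average over the translations `v`, the part of `closedBall 0 s \ A` which is moved by `v`
-- into `A \ closedBall 0 s` has volume at least `volume (A \ closedBall 0 s) ^ 2` divided by the
-- volume of the ball that contains all relevant `v`; symmetrize in the direction of a good `v`.
lemma exists_volume_steiner_sdiff_add_sq_div_le [NeZero n] {R : ℝ} (hA : IsCompact A)
    (hAR : A ⊆ closedBall 0 R)
    (hvol : volume A = volume (closedBall (0 : EuclideanSpace ℝ (Fin n)) s)) :
    ∃ u : EuclideanSpace ℝ (Fin n), ‖u‖ = 1 ∧
      volume (steiner u A \ closedBall 0 s) + volume (A \ closedBall 0 s) ^ 2 /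
        volume (closedBall (0 : EuclideanSpace ℝ (Fin n)) (R + s)) ≤
          volume (A \ closedBall 0 s) := by
  set B := closedBall (0 : EuclideanSpace ℝ (Fin n)) s
  have hB : MeasurableSet B := measurableSet_closedBall
  have hfin : volume (A \ B) ≠ ∞ :=
    measure_ne_top_of_subset Set.sdiff_subset hA.measure_lt_top.ne
  have hsymm : volume (B \ A) = volume (A \ B) :=
    measure_sdiff_symm hB.nullMeasurableSet hA.measurableSet.nullMeasurableSet hvol.symm
      (measure_ne_top_of_subset Set.inter_subset_right hA.measure_lt_top.ne)
  have hrange : ∀ y ∈ B \ A, ∀ v, y + v ∈ A \ B → v ∈ closedBall 0 (R + s) := by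
    intro y hy v hv
    rw [mem_closedBall_zero_iff, ← add_sub_cancel_left y v]
    exact (norm_sub_le _ _).trans
      (add_le_add (mem_closedBall_zero_iff.1 (hAR hv.1)) (mem_closedBall_zero_iff.1 hy.1))
  obtain ⟨v, hv⟩ := exists_mul_measure_le_measure_inter_preimage_add_mul (μ := volume)
    (hA.measurableSet.diff hB) (hB.diff hA.measurableSet) measurableSet_closedBall
    (ENNReal.mul_ne_top (hsymm ▸ hfin) hfin) measure_closedBall_lt_top.ne hrange
  rw [hsymm, ← sq] at hv
  obtain ⟨u, hu, huv⟩ := exists_norm_eq_one_smul_eq v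
  refine ⟨u, hu, (add_le_add_right (ENNReal.div_le_of_le_mul hv) _).trans ?_⟩
  exact volume_steiner_sdiff_add_le (c := ‖v‖) hu hA
    ((hB.diff hA.measurableSet).inter (measurable_add_const v (hA.measurableSet.diff hB)))
    Set.inter_subset_left fun w hw => by rw [huv]; exact hw.2

end Gain

/-! ### Sets of the volume of a ball -/

section Ball

variable {V : Type*} [NormedAddCommGroup V] [NormedSpace ℝ V]

lemma exists_ball_subset_closedBall_sdiff {x : V} {s : ℝ} (hs : 0 ≤ s) (hx : s < ‖x‖) (ρ : ℝ) :
    ∃ y, ball y (ρ / 2) ⊆ closedBall x ρ \ closedBall 0 s := by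
  obtain hρ | hρ := le_or_gt ρ 0
  · exact ⟨0, by rw [ball_eq_empty.2 (by linarith)]; exact Set.empty_subset _⟩
  have hx0 : 0 < ‖x‖ := hs.trans_lt hx
  set e := (ρ / 2 / ‖x‖) • x
  have he : ‖e‖ = ρ / 2 := by
    rw [norm_smul, Real.norm_of_nonneg (by positivity), div_mul_cancel₀ _ hx0.ne']
  have hxe : ‖x + e‖ = ‖x‖ + ρ / 2 := by
    rw [(SameRay.sameRay_nonneg_smul_right x (by positivity)).norm_add, he]
  refine ⟨x + e, fun z hz => ⟨?_, fun hzs => ?_⟩⟩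
  · have htri := dist_triangle z (x + e) x
    rw [dist_self_add_left, he] at htri
    rw [mem_closedBall]
    linarith [mem_ball.1 hz]
  · have htri := norm_sub_norm_le (x + e) z
    rw [← dist_eq_norm, dist_comm] at htri
    linarith [mem_ball.1 hz, mem_closedBall_zero_iff.1 hzs]

lemma exists_ball_subset_closedBall_inter {p : V} {m r : ℝ} (hm : 0 ≤ m) (hmr : m ≤ r)
    (hp : p ∈ closedBall 0 r) : ∃ q, ball q m ⊆ closedBall 0 r ∩ closedBall p (2 * m) := by
  obtain hr | hr := (hm.trans hmr).eq_or_lt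
  · exact ⟨p, by rw [ball_eq_empty.2 (hmr.trans_eq hr.symm)]; exact Set.empty_subset _⟩
  rw [mem_closedBall_zero_iff] at hp
  have hpm : m / r * ‖p‖ ≤ m := by
    rw [div_mul_eq_mul_div, div_le_iff₀ hr]
    gcongr
  have hq : ‖(1 - m / r) • p‖ ≤ r - m := by
    have hnn : 0 ≤ 1 - m / r := sub_nonneg.2 ((div_le_one hr).2 hmr)
    calc ‖(1 - m / r) • p‖ = (1 - m / r) * ‖p‖ := by rw [norm_smul, Real.norm_of_nonneg hnn]
      _ ≤ (1 - m / r) * r := by gcongr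
      _ = r - m := by field_simp
  have hpq : dist ((1 - m / r) • p) p ≤ m := by
    rw [dist_eq_norm, show (1 - m / r) • p - p = (-(m / r)) • p by module, norm_smul, norm_neg,
      Real.norm_of_nonneg (by positivity)]
    exact hpm
  refine ⟨(1 - m / r) • p, ball_subset_closedBall.trans (Set.subset_inter ?_ ?_)⟩ <;>
    refine closedBall_subset_closedBall' ?_
  · rw [dist_zero_right]
    linarith
  · linarith

variable [FiniteDimensional ℝ V] [MeasurableSpace V] [BorelSpace V] {μ : Measure V}
  [μ.IsAddHaarMeasure]

lemma exists_measure_closedBall_eq [Nontrivial V] {v : ℝ≥0∞} (hv : v ≠ ∞) :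
    ∃ r : ℝ, 0 ≤ r ∧ μ (closedBall 0 r) = v := by
  have hpos : μ (ball 0 1) ≠ 0 := (measure_ball_pos μ 0 one_pos).ne'
  refine ⟨(v / μ (ball 0 1)).toReal ^ (Module.finrank ℝ V : ℝ)⁻¹, by positivity, ?_⟩
  rw [Measure.addHaar_closedBall μ _ (by positivity),
    Real.rpow_inv_natCast_pow ENNReal.toReal_nonneg Module.finrank_pos.ne',
    ENNReal.ofReal_toReal (ENNReal.div_ne_top hv hpos),
    ENNReal.div_mul_cancel hpos measure_ball_lt_top.ne]

lemma measure_closedBall_lt_measure_closedBall [Nontrivial V] {r r' : ℝ} (hr : 0 ≤ r)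
    (hrr' : r < r') : μ (closedBall (0 : V) r) < μ (closedBall 0 r') := by
  rw [Measure.addHaar_closedBall μ _ hr, Measure.addHaar_closedBall μ _ (hr.trans hrr'.le)]
  refine (ENNReal.mul_lt_mul_iff_left (measure_ball_pos μ 0 one_pos).ne'
    measure_ball_lt_top.ne).2 ((ENNReal.ofReal_lt_ofReal_iff (pow_pos (hr.trans_lt hrr') _)).2 ?_)
  exact pow_lt_pow_left₀ hrr' hr Module.finrank_pos.ne'

lemma eventually_lt_of_tendsto_measure_closedBall [Nontrivial V] {ι : Type*} {l : Filter ι}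
    {s : ι → ℝ} {r r' : ℝ} (hr : 0 ≤ r) (hrr' : r < r')
    (hs : Tendsto (fun i => μ (closedBall 0 (s i))) l (𝓝 (μ (closedBall 0 r)))) :
    ∀ᶠ i in l, s i < r' := by
  filter_upwards [hs.eventually_lt_const (measure_closedBall_lt_measure_closedBall hr hrr')]
    with i hi
  by_contra! h
  exact hi.not_ge (measure_mono (closedBall_subset_closedBall h))

lemma hausdorffDist_closedBall_le {E : Set V} {r δ m : ℝ} (hr : 0 ≤ r) (hδ : 0 ≤ δ)
    (hδm : δ ≤ 2 * m) (hmr : m ≤ r) (hE : μ (closedBall 0 r) ≤ μ E)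
    (hsub : E ⊆ closedBall 0 (r + δ))
    (hlt : μ (closedBall 0 (r + δ)) < μ (closedBall 0 r) + μ (ball 0 m)) :
    hausdorffDist E (closedBall 0 r) ≤ 2 * m := by
  refine hausdorffDist_le_of_mem_dist (hδ.trans hδm) (fun x hx => ?_) fun p hp => ?_
  · have hx' : x ∈ cthickening δ (closedBall (0 : V) r) := by
      rw [cthickening_closedBall hδ hr, add_comm]
      exact hsub hx
    rw [(isCompact_closedBall 0 r).cthickening_eq_biUnion_closedBall hδ] at hx'
    obtain ⟨y, hy, hxy⟩ := Set.mem_iUnion₂.1 hx'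
    exact ⟨y, hy, (mem_closedBall.1 hxy).trans hδm⟩
  · obtain ⟨q, hq⟩ := exists_ball_subset_closedBall_inter (by linarith) hmr hp
    have hmeet : ¬ Disjoint E (ball q m) := fun hdisj => hlt.not_ge <| by
      calc μ (closedBall 0 r) + μ (ball 0 m) ≤ μ E + μ (ball q m) := by
            rw [Measure.addHaar_ball_center μ q]
            gcongr
        _ = μ (E ∪ ball q m) := (measure_union hdisj measurableSet_ball).symm
        _ ≤ μ (closedBall 0 (r + δ)) := measure_mono <| Set.union_subset hsub fun z hz =>
            closedBall_subset_closedBall (le_add_of_nonneg_right hδ) (hq hz).1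
    obtain ⟨y, hyE, hyq⟩ := Set.not_disjoint_iff.1 hmeet
    exact ⟨y, hyE, dist_comm y p ▸ mem_closedBall.1 (hq hyq).2⟩

lemma tendsto_hausdorffDist_closedBall {ι : Type*} {l : Filter ι} {E : ι → Set V} {r : ℝ}
    (hr : 0 ≤ r) (hne : ∀ i, (E i).Nonempty) (hE : ∀ i, μ (closedBall 0 r) ≤ μ (E i))
    (hsub : ∀ δ > 0, ∀ᶠ i in l, E i ⊆ closedBall 0 (r + δ)) :
    Tendsto (fun i => hausdorffDist (E i) (closedBall 0 r)) l (𝓝 0) := by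
  refine tendsto_order.2 ⟨fun a ha => .of_forall fun i => ha.trans_le hausdorffDist_nonneg,
    fun ε hε => ?_⟩
  obtain rfl | hr := hr.eq_or_lt
  · filter_upwards [hsub (ε / 2) (half_pos hε)] with i hi
    rw [zero_add] at hi
    rw [closedBall_zero]
    refine (hausdorffDist_le_of_mem_dist (half_pos hε).le
      (fun x hx => ⟨0, Set.mem_singleton 0, hi hx⟩) fun p hp => ?_).trans_lt (half_lt_self hε)
    obtain ⟨y, hy⟩ := hne i
    exact ⟨y, hy, by rw [Set.mem_singleton_iff.1 hp, dist_comm]; exact hi hy⟩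
  · set m := min r (ε / 4)
    have hm : 0 < m := by positivity
    have hmε : 2 * m < ε := by linarith [min_le_right r (ε / 4)]
    have hlim := tendsto_measure_cthickening_of_isCompact (μ := μ)
      (isCompact_closedBall (0 : V) r)
    have hlt : μ (closedBall 0 r) < μ (closedBall 0 r) + μ (ball 0 m) :=
      ENNReal.lt_add_right measure_closedBall_lt_top.ne (measure_ball_pos μ 0 hm).ne'
    obtain ⟨δ, hδlt, hδ⟩ := (((hlim.mono_left nhdsWithin_le_nhds).eventually_lt_const hlt).and
      (Ioc_mem_nhdsGT (show 0 < 2 * m by positivity))).exists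
    rw [cthickening_closedBall hδ.1.le hr.le, add_comm] at hδlt
    filter_upwards [hsub δ hδ.1] with i hi
    exact (hausdorffDist_closedBall_le hr.le hδ.1.le hδ.2 (min_le_left _ _) (hE i) hi
      hδlt).trans_lt hmε

end Ball

/-! ### Symmetrizing countably many sets simultaneously -/

lemma tendsto_zero_of_frequently_add_sq_div_le {a : ℕ → ℝ≥0∞} (ha : Antitone a) (h0 : a 0 ≠ ∞)
    {C : ℝ≥0∞} (hC : C ≠ ∞) (hgain : ∃ᶠ i in atTop, a (i + 1) + a i ^ 2 / C ≤ a i) :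
    Tendsto a atTop (𝓝 0) := by
  have hlim : Tendsto a atTop (𝓝 (⨅ i, a i)) := tendsto_atTop_iInf ha
  set L := ⨅ i, a i
  have hL : ∀ i, L ≤ a i := iInf_le a
  have hLgain : L + L ^ 2 / C ≤ L + 0 := by
    rw [add_zero]
    refine ge_of_tendsto_of_frequently hlim (hgain.mono fun i hi => le_trans ?_ hi)
    gcongr <;> exact hL _
  have hL0 : L ^ 2 / C = 0 :=
    le_zero_iff.1 ((ENNReal.add_le_add_iff_left (ne_top_of_le_ne_top h0 (hL 0))).1 hLgain)
  rwa [(pow_eq_zero_iff two_ne_zero).1 ((ENNReal.div_eq_zero_iff.1 hL0).resolve_right hC)] at hlim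

section Iterate

variable {n : ℕ}

/-- The iterated Steiner symmetrization `S_{u (i - 1)} ⋯ S_{u 0} E`. -/
noncomputable def steinerIter (u : ℕ → EuclideanSpace ℝ (Fin n))
    (E : Set (EuclideanSpace ℝ (Fin n))) : ℕ → Set (EuclideanSpace ℝ (Fin n))
  | 0 => E
  | i + 1 => steiner (u i) (steinerIter u E i)

variable {u : ℕ → EuclideanSpace ℝ (Fin n)} {E : Set (EuclideanSpace ℝ (Fin n))}

lemma nonempty_steinerIter (u : ℕ → EuclideanSpace ℝ (Fin n)) (hE : E.Nonempty) :
    ∀ i, (steinerIter u E i).Nonempty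
  | 0 => hE
  | i + 1 => nonempty_steiner (u i) (nonempty_steinerIter u hE i)

lemma isCompact_steinerIter (hu : ∀ i, ‖u i‖ = 1) (hE : IsCompact E) :
    ∀ i, IsCompact (steinerIter u E i)
  | 0 => hE
  | i + 1 => isCompact_steiner (hu i) (isCompact_steinerIter hu hE i)

lemma volume_steinerIter (hu : ∀ i, ‖u i‖ = 1) (hE : IsCompact E) :
    ∀ i, volume (steinerIter u E i) = volume E
  | 0 => rfl
  | i + 1 =>
    (volume_steiner (hu i) (isCompact_steinerIter hu hE i)).trans (volume_steinerIter hu hE i)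

lemma steinerIter_subset_closedBall (hu : ∀ i, ‖u i‖ = 1) {R : ℝ} (hE : E ⊆ closedBall 0 R) :
    ∀ i, steinerIter u E i ⊆ closedBall 0 R
  | 0 => hE
  | i + 1 => steiner_subset_closedBall (hu i) (steinerIter_subset_closedBall hu hE i)

lemma antitone_volume_steinerIter_sdiff (hu : ∀ i, ‖u i‖ = 1) (hE : IsCompact E) (s : ℝ) :
    Antitone fun i => volume (steinerIter u E i \ closedBall 0 s) :=
  antitone_nat_of_succ_le fun i =>
    volume_steiner_sdiff_le (hu i) (isCompact_steinerIter hu hE i) s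

lemma cthickening_steinerIter_subset (hu : ∀ i, ‖u i‖ = 1) (hE : IsCompact E) {ρ : ℝ}
    (hρ : 0 ≤ ρ) : ∀ i, cthickening ρ (steinerIter u E i) ⊆ steinerIter u (cthickening ρ E) i
  | 0 => subset_rfl
  | i + 1 => (cthickening_steiner_subset (hu i) (isCompact_steinerIter hu hE i) hρ).trans
      (steiner_mono (hu i) (isCompact_steinerIter hu hE.cthickening i).isBounded
        (cthickening_steinerIter_subset hu hE hρ i))

lemma exists_forall_steinerIter {ι : Type*} (A : ι → Set (EuclideanSpace ℝ (Fin n)))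
    {P : ℕ → (ι → Set (EuclideanSpace ℝ (Fin n))) → EuclideanSpace ℝ (Fin n) → Prop}
    (hP : ∀ i X, ∃ v, P i X v) :
    ∃ u : ℕ → EuclideanSpace ℝ (Fin n), ∀ i, P i (fun m => steinerIter u (A m) i) (u i) := by
  choose pick hpick using hP
  let F : ℕ → ι → Set (EuclideanSpace ℝ (Fin n)) :=
    Nat.rec A fun i X m => steiner (pick i X) (X m)
  let u : ℕ → EuclideanSpace ℝ (Fin n) := fun i => pick i (F i)
  have hF : ∀ i, (fun m => steinerIter u (A m) i) = F i := fun i => by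
    induction i with
    | zero => rfl
    | succ i ih => exact funext fun m => congrArg (steiner (u i)) (congrFun ih m)
  exact ⟨u, fun i => hF i ▸ hpick i (F i)⟩

lemma exists_steinerIter_tendsto_volume_sdiff [NeZero n]
    {A : ℕ → Set (EuclideanSpace ℝ (Fin n))} {s : ℕ → ℝ} (hA : ∀ m, IsCompact (A m))
    (hvol : ∀ m, volume (A m) = volume (closedBall (0 : EuclideanSpace ℝ (Fin n)) (s m))) :
    ∃ u : ℕ → EuclideanSpace ℝ (Fin n), (∀ i, ‖u i‖ = 1) ∧ ∀ m,
      Tendsto (fun i => volume (steinerIter u (A m) i \ closedBall 0 (s m))) atTop (𝓝 0) := by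
  choose R hR using fun m => (hA m).isBounded.subset_closedBall 0
  let Good (m : ℕ) (K : Set (EuclideanSpace ℝ (Fin n))) : Prop := IsCompact K ∧
    K ⊆ closedBall 0 (R m) ∧ volume K = volume (closedBall (0 : EuclideanSpace ℝ (Fin n)) (s m))
  let Gain (m : ℕ) (K : Set (EuclideanSpace ℝ (Fin n))) (v : EuclideanSpace ℝ (Fin n)) : Prop :=
    volume (steiner v K \ closedBall 0 (s m)) + volume (K \ closedBall 0 (s m)) ^ 2 /
      volume (closedBall (0 : EuclideanSpace ℝ (Fin n)) (R m + s m)) ≤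
        volume (K \ closedBall 0 (s m))
  have hpick : ∀ m K, ∃ v, ‖v‖ = 1 ∧ (Good m K → Gain m K v) := fun m K => by
    by_cases hK : Good m K
    · obtain ⟨v, hv, hgain⟩ := exists_volume_steiner_sdiff_add_sq_div_le hK.1 hK.2.1 hK.2.2
      exact ⟨v, hv, fun _ => hgain⟩
    · obtain ⟨v, hv⟩ := exists_norm_eq (EuclideanSpace ℝ (Fin n)) zero_le_one
      exact ⟨v, hv, fun h => (hK h).elim⟩
  -- The first component of `Nat.unpair` takes every value infinitely often.
  obtain ⟨u, hu⟩ := exists_forall_steinerIter A fun i X => hpick i.unpair.1 (X i.unpair.1)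
  have hunit : ∀ i, ‖u i‖ = 1 := fun i => (hu i).1
  refine ⟨u, hunit, fun m => tendsto_zero_of_frequently_add_sq_div_le
    (C := volume (closedBall (0 : EuclideanSpace ℝ (Fin n)) (R m + s m)))
    (antitone_volume_steinerIter_sdiff hunit (hA m) (s m))
    (measure_ne_top_of_subset Set.sdiff_subset (hA m).measure_lt_top.ne)
    measure_closedBall_lt_top.ne (frequently_atTop.2 fun N => ?_)⟩
  have hgood : Good m (steinerIter u (A m) (Nat.pair m N)) :=
    ⟨isCompact_steinerIter hunit (hA m) _, steinerIter_subset_closedBall hunit (hR m) _,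
      (volume_steinerIter hunit (hA m) _).trans (hvol m)⟩
  have hgain := (hu (Nat.pair m N)).2
  rw [Nat.unpair_pair] at hgain
  exact ⟨Nat.pair m N, Nat.right_le_pair m N, hgain hgood⟩

/-! ### Convergence to a ball -/

lemma eventually_steinerIter_subset_closedBall (hu : ∀ i, ‖u i‖ = 1) (hE : IsCompact E)
    {ρ s : ℝ} (hρ : 0 < ρ) (hs : 0 ≤ s)
    (hlim : Tendsto (fun i => volume (steinerIter u (cthickening ρ E) i \ closedBall 0 s))
      atTop (𝓝 0)) :
    ∀ᶠ i in atTop, steinerIter u E i ⊆ closedBall 0 s := by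
  have hball : 0 < volume (ball (0 : EuclideanSpace ℝ (Fin n)) (ρ / 2)) :=
    measure_ball_pos volume 0 (half_pos hρ)
  filter_upwards [hlim.eventually_lt_const hball] with i hi x hx
  by_contra hxs
  obtain ⟨y, hy⟩ :=
    exists_ball_subset_closedBall_sdiff hs (not_le.1 (mem_closedBall_zero_iff.not.1 hxs)) ρ
  refine hi.not_ge ?_
  rw [← Measure.addHaar_ball_center volume y]
  exact measure_mono (hy.trans (Set.sdiff_subset_sdiff_left
    ((closedBall_subset_cthickening hx ρ).trans (cthickening_steinerIter_subset hu hE hρ.le i))))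

end Iterate

theorem stmt0_general {n : ℕ} [NeZero n] {E : Set (EuclideanSpace ℝ (Fin n))}
    (hE : IsCompact E) (hne : E.Nonempty) :
    ∃ u : ℕ → EuclideanSpace ℝ (Fin n), (∀ i, ‖u i‖ = 1) ∧ ∃ r : ℝ, 0 ≤ r ∧
      volume (closedBall (0 : EuclideanSpace ℝ (Fin n)) r) = volume E ∧
      Tendsto (fun i => hausdorffDist (steinerIter u E i) (closedBall 0 r)) atTop (𝓝 0) := by
  set ρ : ℕ → ℝ := fun m => 1 / (m + 1)
  have hρ : ∀ m, 0 < ρ m := fun m => Nat.one_div_pos_of_nat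
  have exists_radius {K : Set (EuclideanSpace ℝ (Fin n))} (hK : IsCompact K) :
      ∃ t : ℝ, 0 ≤ t ∧ volume (closedBall (0 : EuclideanSpace ℝ (Fin n)) t) = volume K :=
    exists_measure_closedBall_eq hK.measure_lt_top.ne
  obtain ⟨r, hr, hrvol⟩ := exists_radius hE
  choose s hs hsvol using fun m => exists_radius (hE.cthickening (r := ρ m))
  obtain ⟨u, hu, hlim⟩ := exists_steinerIter_tendsto_volume_sdiff
    (fun m => hE.cthickening (r := ρ m)) fun m => (hsvol m).symm
  have hradii : Tendsto (fun m => volume (closedBall (0 : EuclideanSpace ℝ (Fin n)) (s m))) atTop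
      (𝓝 (volume (closedBall (0 : EuclideanSpace ℝ (Fin n)) r))) := by
    simp only [hsvol, hrvol]
    exact (tendsto_measure_cthickening_of_isCompact hE).comp
      tendsto_one_div_add_atTop_nhds_zero_nat
  refine ⟨u, hu, r, hr, hrvol, tendsto_hausdorffDist_closedBall (μ := volume) hr
    (nonempty_steinerIter u hne) (fun i => (hrvol.trans (volume_steinerIter hu hE i).symm).le)
    fun δ hδ => ?_⟩
  obtain ⟨m, hm⟩ :=
    (eventually_lt_of_tendsto_measure_closedBall hr (lt_add_of_pos_right r hδ) hradii).exists
  filter_upwards [eventually_steinerIter_subset_closedBall hu hE (hρ m) (hs m) (hlim m)] with i hi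
  exact hi.trans (closedBall_subset_closedBall hm.le)

/-- For a compact set `E ⊆ ℝⁿ` (`n ≥ 2`) with nonempty interior there is a sequence of
unit directions whose successive Steiner symmetrizations of `E` admit a subsequence
converging, in the Hausdorff distance, to the origin-centered closed ball of the same
Lebesgue measure as `E`. -/
theorem stmt0 (n : ℕ) (hn : 2 ≤ n) (E : Set (EuclideanSpace ℝ (Fin n)))
    (hE : IsCompact E) (hint : (interior E).Nonempty) :
    ∃ u : ℕ → EuclideanSpace ℝ (Fin n), (∀ i, ‖u i‖ = 1) ∧
      ∃ Eseq : ℕ → Set (EuclideanSpace ℝ (Fin n)),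
        Eseq 0 = E ∧ (∀ i, Eseq (i + 1) = steiner (u i) (Eseq i)) ∧
        ∃ r : ℝ, 0 ≤ r ∧
          volume (closedBall (0 : EuclideanSpace ℝ (Fin n)) r) = volume E ∧
          ∃ φ : ℕ → ℕ, StrictMono φ ∧
            Tendsto (fun j => hausdorffDist (Eseq (φ j)) (closedBall (0 : EuclideanSpace ℝ (Fin n)) r))
              atTop (nhds 0) := by
  have : NeZero n := ⟨by omega⟩
  obtain ⟨u, hu, r, hr, hvol, hlim⟩ := stmt0_general hE (hint.mono interior_subset)
  exact ⟨u, hu, steinerIter u E, rfl, fun _ => rfl, r, hr, hvol, id, strictMono_id, hlim⟩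
end

section
/- Suppose K, L ∈ K₀ⁿ, regarded as subsets of ℝ^{n-1} × ℝ, and suppose S(K*) = L*, where S denotes Steiner symmetrization about the hyperplane e_n^⊥. Then whenever x' ∈ ℝ^{n-1} and t, s ∈ ℝ with t ≠ −s satisfy h_K(x', t) = 1 = h_K(x', −s), one has h_L(x', t/2 + s/2) = 1. -/
open MeasureTheory Filter Metric

/-- Support function `h_K(z) = max {z·y : y ∈ K}` of a set `K ⊆ ℝⁿ`. -/
noncomputable def suppFn {n : ℕ} (K : Set (EuclideanSpace ℝ (Fin n)))
    (z : EuclideanSpace ℝ (Fin n)) : ℝ :=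
  sSup ((fun y => (inner ℝ z y : ℝ)) '' K)

/-- Polar body `K* = {x : x·z ≤ 1 for all z ∈ K}`. -/
def polarBody {n : ℕ} (K : Set (EuclideanSpace ℝ (Fin n))) :
    Set (EuclideanSpace ℝ (Fin n)) :=
  {x | ∀ z ∈ K, (inner ℝ x z : ℝ) ≤ 1}

/-!
For bounded `K` the level set `{h_K = 1}` is the frontier of `K*`, so the claim is about a compact
convex set `E = K*` with nonempty interior: if the line `x' + ℝu` meets `∂E` at two parameters
`a ≠ b`, then `x' + ((a - b) / 2)u ∈ ∂(S_u E)`. The point lies in `S_u E` because the section of `E`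
by this line contains the chord between the two given points. If the line meets the interior of `E`,
the section is exactly that chord, and the point is an endpoint of its symmetrization. If the line
misses the interior of `E`, it misses the interior of `S_u E` too, because `E` and `S_u E` have the
same projection onto `u^⊥` and the interior of that projection is the projection of the interior
of `E`.
-/

theorem exists_one_lt_homothety_mem_of_mem_interior {V : Type*} [AddCommGroup V] [Module ℝ V]
    [TopologicalSpace V] [IsTopologicalAddGroup V] [ContinuousSMul ℝ V] {E : Set V} (p : V) {z : V}
    (hz : z ∈ interior E) : ∃ c : ℝ, AffineMap.homothety p c z ∈ E ∧ 1 < c := by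
  have hev : ∀ᶠ c in nhdsWithin (1 : ℝ) (Set.Ioi 1), AffineMap.homothety p c z ∈ E :=
    nhdsWithin_le_nhds (eventually_homothety_mem_of_mem_interior ℝ p hz)
  exact (hev.and self_mem_nhdsWithin).exists

section LineSection

variable {V : Type*} [AddCommGroup V] [Module ℝ V]

/-- The section of `E` by the line through `x` in direction `u`, encoded as a set of parameters
`t : ℝ` rather than of points `x + t • u`: this is the set whose length `steinerLen` measures. -/
def lineSection (u : V) (E : Set V) (x : V) : Set ℝ :=
  {t | x + t • u ∈ E}

theorem mem_lineSection {u x : V} {E : Set V} {t : ℝ} :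
    t ∈ lineSection u E x ↔ x + t • u ∈ E :=
  Iff.rfl

theorem convex_lineSection {E : Set V} (hE : Convex ℝ E) (u x : V) :
    Convex ℝ (lineSection u E x) :=
  (hE.translate_preimage_right x).linear_preimage (LinearMap.toSpanSingleton ℝ V u)

variable [TopologicalSpace V] [IsTopologicalAddGroup V] [ContinuousSMul ℝ V]

theorem isCompact_lineSection [T2Space V] {E : Set V} (hE : IsCompact E) {u : V} (hu : u ≠ 0)
    (x : V) : IsCompact (lineSection u E x) :=
  ((Homeomorph.addLeft x).isClosedEmbedding.comp
    (isClosedEmbedding_smul_left hu)).isCompact_preimage hE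

theorem lineSection_interior_subset (u : V) (E : Set V) (x : V) :
    lineSection u (interior E) x ⊆ interior (lineSection u E x) :=
  preimage_interior_subset_interior_preimage
    (f := fun t : ℝ => x + t • u) (by fun_prop)

theorem openSegment_subset_lineSection_interior {u x : V} {E : Set V} (hE : Convex ℝ E) {r p : ℝ}
    (hr : r ∈ lineSection u (interior E) x) (hp : p ∈ lineSection u E x) :
    openSegment ℝ r p ⊆ lineSection u (interior E) x := by
  rintro _ ⟨α, β, hα, hβ, hαβ, rfl⟩
  have hcombo : x + (α • r + β • p) • u = α • (x + r • u) + β • (x + p • u) := by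
    obtain rfl : α = 1 - β := eq_sub_of_add_eq hαβ
    module
  rw [mem_lineSection, hcombo]
  exact hE.combo_interior_self_mem_interior hr hp hα hβ.le hαβ

theorem Ioo_subset_lineSection_interior {u x : V} {E : Set V} (hE : Convex ℝ E)
    (hint : (lineSection u (interior E) x).Nonempty) {p q : ℝ} (hp : p ∈ lineSection u E x)
    (hq : q ∈ lineSection u E x) : Set.Ioo p q ⊆ lineSection u (interior E) x := by
  rintro c ⟨hpc, hcq⟩
  obtain ⟨r, hr⟩ := hint
  rcases lt_trichotomy c r with hcr | rfl | hrc
  · refine openSegment_subset_lineSection_interior hE hr hp ?_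
    rw [openSegment_symm, openSegment_eq_Ioo (hpc.trans hcr)]
    exact ⟨hpc, hcr⟩
  · exact hr
  · refine openSegment_subset_lineSection_interior hE hr hq ?_
    rw [openSegment_eq_Ioo (hrc.trans hcq)]
    exact ⟨hrc, hcq⟩

theorem lineSection_eq_uIcc_of_mem_frontier {u x : V} {E : Set V} (hE : Convex ℝ E)
    (hEc : IsClosed E) (hint : (lineSection u (interior E) x).Nonempty) {a b : ℝ} (hab : a ≠ b)
    (ha : x + a • u ∈ frontier E) (hb : x + b • u ∈ frontier E) :
    lineSection u E x = Set.uIcc a b := by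
  wlog hlt : a < b generalizing a b
  · rw [Set.uIcc_comm]
    exact this hab.symm hb ha (hab.lt_or_gt.resolve_left hlt)
  rw [Set.uIcc_of_lt hlt]
  rw [hEc.frontier_eq] at ha hb
  refine subset_antisymm (fun r hr => ⟨?_, ?_⟩)
    ((convex_lineSection hE u x).ordConnected.out ha.1 hb.1)
  · by_contra! hra
    exact ha.2 (Ioo_subset_lineSection_interior hE hint hr hb.1 ⟨hra, hlt⟩)
  · by_contra! hbr
    exact hb.2 (Ioo_subset_lineSection_interior hE hint ha.1 hr ⟨hlt, hbr⟩)

end LineSection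

section Steiner

variable {n : ℕ} {u x' : EuclideanSpace ℝ (Fin n)} {E : Set (EuclideanSpace ℝ (Fin n))}

theorem steinerLen_eq_toReal_volume_lineSection (u : EuclideanSpace ℝ (Fin n))
    (E : Set (EuclideanSpace ℝ (Fin n))) (x' : EuclideanSpace ℝ (Fin n)) :
    steinerLen u E x' = (volume (lineSection u E x')).toReal :=
  rfl

theorem steinerProj_add_smul (hx' : x' ∈ (Submodule.span ℝ {u})ᗮ) (t : ℝ) :
    steinerProj u (x' + t • u) = x' := by
  have hu : u ∈ (Submodule.span ℝ {u})ᗮᗮ :=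
    Submodule.le_orthogonal_orthogonal _ (Submodule.mem_span_singleton_self u)
  exact Submodule.eq_starProjection_of_mem_orthogonal (u := x' + t • u) hx'
    (by rw [add_sub_cancel_left]; exact Submodule.smul_mem _ t hu)

theorem exists_steinerProj_add_smul_eq (u z : EuclideanSpace ℝ (Fin n)) :
    ∃ q : ℝ, steinerProj u z + q • u = z := by
  have hsub : z - steinerProj u z ∈ Submodule.span ℝ {u} := by
    have h := Submodule.sub_starProjection_mem_orthogonal (K := (Submodule.span ℝ {u})ᗮ) z
    rwa [Submodule.orthogonal_orthogonal] at h
  obtain ⟨q, hq⟩ := Submodule.mem_span_singleton.1 hsub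
  exact ⟨q, by rw [hq, add_sub_cancel]⟩

theorem mem_lineSection_steiner_iff (hu : u ≠ 0) (hx' : x' ∈ (Submodule.span ℝ {u})ᗮ) {r : ℝ} :
    r ∈ lineSection u (steiner u E) x' ↔
      (lineSection u E x').Nonempty ∧ |r| ≤ steinerLen u E x' / 2 := by
  constructor
  · rintro ⟨_, ⟨z, hz, rfl⟩, t, ht, hrt⟩
    have hproj : steinerProj u z ∈ (Submodule.span ℝ {u})ᗮ := Submodule.coe_mem _
    obtain rfl : x' = steinerProj u z := by
      rw [← steinerProj_add_smul hx' r, hrt, steinerProj_add_smul hproj t]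
    obtain rfl : r = t := smul_left_injective ℝ hu (add_left_cancel hrt)
    obtain ⟨q, hq⟩ := exists_steinerProj_add_smul_eq u z
    exact ⟨⟨q, by rwa [mem_lineSection, hq]⟩, ht⟩
  · rintro ⟨⟨q, hq⟩, hr⟩
    exact ⟨x', ⟨_, hq, steinerProj_add_smul hx' q⟩, r, hr, rfl⟩

theorem lineSection_nonempty_of_mem_steiner {z : EuclideanSpace ℝ (Fin n)}
    (hz : z ∈ steiner u E) : (lineSection u E z).Nonempty := by
  obtain ⟨_, ⟨w, hw, rfl⟩, t, -, rfl⟩ := hz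
  obtain ⟨q, hq⟩ := exists_steinerProj_add_smul_eq u w
  refine ⟨q - t, ?_⟩
  rwa [mem_lineSection, add_assoc, ← add_smul, add_sub_cancel, hq]

theorem lineSection_interior_nonempty_of_mem_interior_steiner (hE : Convex ℝ E)
    (hEint : (interior E).Nonempty) {z : EuclideanSpace ℝ (Fin n)}
    (hz : z ∈ interior (steiner u E)) : (lineSection u (interior E) z).Nonempty := by
  -- Push `z` slightly away from an interior point `p` of `E`: the line through the new point still
  -- meets `E`, and contracting back towards `p` moves the meeting point into the interior.
  obtain ⟨p, hp⟩ := hEint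
  obtain ⟨c, hcz, hc⟩ := exists_one_lt_homothety_mem_of_mem_interior p hz
  obtain ⟨q, hq⟩ := lineSection_nonempty_of_mem_steiner hcz
  have hc0 : 0 < c := one_pos.trans hc
  have hcombo : z + (q / c) • u =
      c⁻¹ • (AffineMap.homothety p c z + q • u) + (1 - c⁻¹) • p := by
    simp only [AffineMap.homothety_apply, vsub_eq_sub, vadd_eq_add]
    match_scalars <;> field_simp
    ring
  refine ⟨q / c, ?_⟩
  rw [mem_lineSection, hcombo]
  exact hE.combo_self_interior_mem_interior hq hp (inv_nonneg.2 hc0.le)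
    (sub_pos.2 (inv_lt_one_of_one_lt₀ hc)) (add_sub_cancel _ _)

theorem add_half_sub_smul_mem_steiner (hE : Convex ℝ E) (hEc : IsCompact E) (hu : u ≠ 0)
    (hx' : x' ∈ (Submodule.span ℝ {u})ᗮ) {a b : ℝ} (ha : x' + a • u ∈ E) (hb : x' + b • u ∈ E) :
    x' + ((a - b) / 2) • u ∈ steiner u E := by
  refine (mem_lineSection_steiner_iff hu hx').2 ⟨⟨a, ha⟩, ?_⟩
  have hchord : Set.uIcc b a ⊆ lineSection u E x' :=
    (convex_lineSection hE u x').ordConnected.uIcc_subset hb ha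
  have hlen : |a - b| ≤ steinerLen u E x' := by
    rw [steinerLen_eq_toReal_volume_lineSection, ← ENNReal.toReal_ofReal (abs_nonneg (a - b)),
      ← Real.volume_interval]
    exact ENNReal.toReal_mono (isCompact_lineSection hEc hu x').measure_ne_top
      (measure_mono hchord)
  rw [abs_div, abs_two]
  gcongr

theorem add_half_sub_smul_mem_frontier_steiner (hE : Convex ℝ E) (hEc : IsCompact E)
    (hEint : (interior E).Nonempty) (hu : u ≠ 0) (hx' : x' ∈ (Submodule.span ℝ {u})ᗮ) {a b : ℝ}
    (hab : a ≠ b) (ha : x' + a • u ∈ frontier E) (hb : x' + b • u ∈ frontier E) :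
    x' + ((a - b) / 2) • u ∈ frontier (steiner u E) := by
  have hmem_steiner : x' + ((a - b) / 2) • u ∈ steiner u E :=
    add_half_sub_smul_mem_steiner hE hEc hu hx' (hEc.isClosed.frontier_subset ha)
      (hEc.isClosed.frontier_subset hb)
  refine ⟨subset_closure hmem_steiner, fun hmem => ?_⟩
  obtain ⟨q, hq⟩ := lineSection_interior_nonempty_of_mem_interior_steiner hE hEint hmem
  rw [mem_lineSection, add_assoc, ← add_smul] at hq
  have hlen : steinerLen u E x' = |b - a| := by
    rw [steinerLen_eq_toReal_volume_lineSection,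
      lineSection_eq_uIcc_of_mem_frontier hE hEc.isClosed ⟨_, hq⟩ hab ha hb,
      Real.volume_interval, ENNReal.toReal_ofReal (abs_nonneg _)]
  have hsub : lineSection u (steiner u E) x' ⊆ Set.Icc (-(|b - a| / 2)) (|b - a| / 2) :=
    fun r hr => abs_le.1 (hlen ▸ ((mem_lineSection_steiner_iff hu hx').1 hr).2)
  have hIoo : (a - b) / 2 ∈ Set.Ioo (-(|b - a| / 2)) (|b - a| / 2) := by
    rw [← interior_Icc]
    exact interior_mono hsub (lineSection_interior_subset u _ x' hmem)
  have habs : |(a - b) / 2| < |b - a| / 2 := abs_lt.2 hIoo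
  rw [abs_div, abs_two, abs_sub_comm] at habs
  exact habs.false

end Steiner

section Polar

variable {n : ℕ} {K : Set (EuclideanSpace ℝ (Fin n))}

theorem polarBody_eq_iInter (K : Set (EuclideanSpace ℝ (Fin n))) :
    polarBody K = ⋂ z ∈ K, {x | (inner ℝ x z : ℝ) ≤ 1} := by
  ext x
  simp only [polarBody, Set.mem_ofPred_eq, Set.mem_iInter]

theorem isClosed_polarBody (K : Set (EuclideanSpace ℝ (Fin n))) : IsClosed (polarBody K) := by
  rw [polarBody_eq_iInter]
  exact isClosed_biInter fun z _ => isClosed_le (by fun_prop) continuous_const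

theorem convex_polarBody (K : Set (EuclideanSpace ℝ (Fin n))) : Convex ℝ (polarBody K) := by
  rw [polarBody_eq_iInter]
  exact convex_iInter₂ fun z _ => convex_halfSpace_le
    ⟨fun x y => inner_add_left x y z, fun c x => real_inner_smul_left x z c⟩ 1

theorem isBounded_polarBody (hK0 : (0 : EuclideanSpace ℝ (Fin n)) ∈ interior K) :
    Bornology.IsBounded (polarBody K) := by
  obtain ⟨ε, hε, hball⟩ := nhds_basis_closedBall.mem_iff.1 (mem_interior_iff_mem_nhds.1 hK0)
  refine isBounded_iff_forall_norm_le.2 ⟨1 / ε, fun x hx => ?_⟩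
  rcases eq_or_ne x 0 with rfl | hx0
  · rw [norm_zero]
    positivity
  have hnorm : 0 < ‖x‖ := norm_pos_iff.2 hx0
  have hmem : (ε / ‖x‖) • x ∈ K := hball <| by
    rw [mem_closedBall_zero_iff, norm_smul, Real.norm_of_nonneg (by positivity),
      div_mul_cancel₀ _ hnorm.ne']
  rw [le_div_iff₀' hε]
  calc ε * ‖x‖ = inner ℝ x ((ε / ‖x‖) • x) := by
        rw [real_inner_smul_right, real_inner_self_eq_norm_mul_norm]
        field_simp
    _ ≤ 1 := hx _ hmem

theorem isCompact_polarBody (hK0 : (0 : EuclideanSpace ℝ (Fin n)) ∈ interior K) :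
    IsCompact (polarBody K) :=
  isCompact_of_isClosed_isBounded (isClosed_polarBody K) (isBounded_polarBody hK0)

end Polar

section SupportFunction

variable {n : ℕ} {K : Set (EuclideanSpace ℝ (Fin n))}

theorem suppFn_smul_of_nonneg (K : Set (EuclideanSpace ℝ (Fin n)))
    (z : EuclideanSpace ℝ (Fin n)) {c : ℝ} (hc : 0 ≤ c) :
    suppFn K (c • z) = c * suppFn K z := by
  rw [suppFn, suppFn, ← smul_eq_mul, ← Real.sSup_smul_of_nonneg hc, ← Set.image_smul,
    Set.image_image]
  simp only [real_inner_smul_left, smul_eq_mul]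

theorem suppFn_zero (K : Set (EuclideanSpace ℝ (Fin n))) : suppFn K 0 = 0 := by
  simpa using suppFn_smul_of_nonneg K 0 le_rfl

theorem inner_le_suppFn (hK : Bornology.IsBounded K) (z : EuclideanSpace ℝ (Fin n))
    {y : EuclideanSpace ℝ (Fin n)} (hy : y ∈ K) : (inner ℝ z y : ℝ) ≤ suppFn K z :=
  le_csSup ((innerSL ℝ z).lipschitz.isBounded_image hK).bddAbove (Set.mem_image_of_mem _ hy)

theorem mem_polarBody_iff_suppFn_le_one (hK : Bornology.IsBounded K)
    {z : EuclideanSpace ℝ (Fin n)} : z ∈ polarBody K ↔ suppFn K z ≤ 1 :=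
  ⟨fun hz => Real.sSup_le (Set.forall_mem_image.2 hz) zero_le_one,
    fun hz _ hy => (inner_le_suppFn hK z hy).trans hz⟩

theorem suppFn_lt_one_of_mem_interior_polarBody (hK : Bornology.IsBounded K)
    {z : EuclideanSpace ℝ (Fin n)} (hz : z ∈ interior (polarBody K)) : suppFn K z < 1 := by
  obtain ⟨c, hcz, hc⟩ := exists_one_lt_homothety_mem_of_mem_interior 0 hz
  have hcz' : c * suppFn K z ≤ 1 := by
    rw [← suppFn_smul_of_nonneg K z (one_pos.trans hc).le,
      ← mem_polarBody_iff_suppFn_le_one hK]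
    simpa [AffineMap.homothety_apply] using hcz
  by_contra! hone
  nlinarith

theorem mem_interior_polarBody_of_suppFn_lt_one (hK : Bornology.IsBounded K)
    {z : EuclideanSpace ℝ (Fin n)} (hz : suppFn K z < 1) : z ∈ interior (polarBody K) := by
  obtain ⟨R, hR, hKR⟩ := hK.exists_pos_norm_le
  refine mem_interior_iff_mem_nhds.2 (mem_nhds_iff.2
    ⟨(1 - suppFn K z) / R, div_pos (sub_pos.2 hz) hR, fun x hx y hy => ?_⟩)
  have hxz : ‖x - z‖ * R ≤ 1 - suppFn K z :=
    ((lt_div_iff₀ hR).1 (mem_ball_iff_norm.1 hx)).le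
  calc (inner ℝ x y : ℝ) = inner ℝ z y + inner ℝ (x - z) y := by
        rw [← inner_add_left, add_sub_cancel]
    _ ≤ suppFn K z + ‖x - z‖ * ‖y‖ :=
        add_le_add (inner_le_suppFn hK z hy) (real_inner_le_norm _ _)
    _ ≤ suppFn K z + ‖x - z‖ * R := by gcongr; exact hKR y hy
    _ ≤ 1 := by linarith

theorem mem_frontier_polarBody_iff_suppFn_eq_one (hK : Bornology.IsBounded K)
    {z : EuclideanSpace ℝ (Fin n)} : z ∈ frontier (polarBody K) ↔ suppFn K z = 1 := by
  have hint : z ∈ interior (polarBody K) ↔ suppFn K z < 1 :=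
    ⟨suppFn_lt_one_of_mem_interior_polarBody hK, mem_interior_polarBody_of_suppFn_lt_one hK⟩
  rw [(isClosed_polarBody K).frontier_eq, Set.mem_sdiff, hint, mem_polarBody_iff_suppFn_le_one hK,
    not_lt, ← le_antisymm_iff]

end SupportFunction

theorem lastDir_ne_zero {n : ℕ} (hn : n ≠ 0) : lastDir n ≠ 0 := by
  simp [lastDir, hn]

theorem stmt8_general {n : ℕ} {u : EuclideanSpace ℝ (Fin n)} (hu : u ≠ 0)
    {K L : Set (EuclideanSpace ℝ (Fin n))} (hK : Bornology.IsBounded K)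
    (hK0 : (0 : EuclideanSpace ℝ (Fin n)) ∈ interior K) (hL : Bornology.IsBounded L)
    (hS : steiner u (polarBody K) = polarBody L) {x' : EuclideanSpace ℝ (Fin n)}
    (hx' : x' ∈ (Submodule.span ℝ {u})ᗮ) {t s : ℝ} (hts : t ≠ -s)
    (ht : suppFn K (x' + t • u) = 1) (hs : suppFn K (x' + (-s) • u) = 1) :
    suppFn L (x' + (t / 2 + s / 2) • u) = 1 := by
  have hint : (interior (polarBody K)).Nonempty :=
    ⟨0, mem_interior_polarBody_of_suppFn_lt_one hK (by rw [suppFn_zero]; exact one_pos)⟩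
  have hmid : t / 2 + s / 2 = (t - -s) / 2 := by ring
  rw [hmid, ← mem_frontier_polarBody_iff_suppFn_eq_one hL, ← hS]
  exact add_half_sub_smul_mem_frontier_steiner (convex_polarBody K) (isCompact_polarBody hK0)
    hint hu hx' hts ((mem_frontier_polarBody_iff_suppFn_eq_one hK).2 ht)
    ((mem_frontier_polarBody_iff_suppFn_eq_one hK).2 hs)

/-- If `S(K*) = L*` (Steiner symmetrization about `e_n^⊥`), then `h_K(x',t) = 1 = h_K(x',-s)`
with `t ≠ -s` implies `h_L(x', t/2 + s/2) = 1`. -/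
theorem stmt8 (n : ℕ) (hn : 2 ≤ n)
    (K L : Set (EuclideanSpace ℝ (Fin n)))
    (hKcomp : IsCompact K) (hKconv : Convex ℝ K)
    (hK0 : (0 : EuclideanSpace ℝ (Fin n)) ∈ interior K)
    (hLcomp : IsCompact L) (hLconv : Convex ℝ L)
    (hL0 : (0 : EuclideanSpace ℝ (Fin n)) ∈ interior L)
    (hS : steiner (lastDir n) (polarBody K) = polarBody L) :
    ∀ x' ∈ (Submodule.span ℝ {lastDir n})ᗮ, ∀ t s : ℝ, t ≠ -s →
      suppFn K (x' + t • lastDir n) = 1 →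
      suppFn K (x' + (-s) • lastDir n) = 1 →
      suppFn L (x' + (t / 2 + s / 2) • lastDir n) = 1 :=
  fun _ hx' _ _ hts ht hs =>
    stmt8_general (lastDir_ne_zero (by lia)) hKcomp.isBounded hK0 hLcomp.isBounded hS hx' hts ht hs
end

section
/- Let n ≥ 2, r > 0, and let U be a nonempty relatively open subset of the sphere rS^{n-1} = {x ∈ ℝⁿ : |x| = r}. Then there exist finitely many unit vectors v_1, …, v_m such that rS^{n-1} ⊆ ∪_{i=1}^m σ_{v_i}(U). -/
open MeasureTheory Filter Metric

/-- Reflection `σ_v(x) = x - 2(x·v)v` of `ℝⁿ` across the hyperplane `v^⊥`. -/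
noncomputable def reflHyp {n : ℕ} (v : EuclideanSpace ℝ (Fin n))
    (x : EuclideanSpace ℝ (Fin n)) : EuclideanSpace ℝ (Fin n) :=
  x - (2 * (inner ℝ x v : ℝ)) • v

/-!
In dimension at least two, any point `p` of a sphere centred at the origin is carried to any other
point `x` of it by the reflection in the hyperplane orthogonal to `p - x` or, if `x = p`, in any
hyperplane through `p`. Hence, for `p ∈ U`, the sets `σ_v(U)` contain every point of the sphere;
being relatively open, they form an open cover of the sphere, which is compact.
-/

theorem exists_finset_subset_iUnion_image_inter {X ι : Type*} [TopologicalSpace X] {K V : Set X}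
    {p : X} {f : ι → X → X} (hK : IsCompact K) (hV : IsOpen V) (hp : p ∈ V)
    (hf : ∀ i, IsOpenMap (f i)) (hfK : ∀ i, f i ⁻¹' K ⊆ K) (htrans : ∀ x ∈ K, ∃ i, f i p = x) :
    ∃ t : Finset ι, K ⊆ ⋃ i ∈ t, f i '' (V ∩ K) := by
  have hcover : K ⊆ ⋃ i, f i '' V := fun x hx ↦
    let ⟨i, hi⟩ := htrans x hx
    Set.mem_iUnion.2 ⟨i, p, hp, hi⟩
  obtain ⟨t, ht⟩ := hK.elim_finite_subcover _ (fun i ↦ hf i V hV) hcover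
  refine ⟨t, fun x hx ↦ ?_⟩
  obtain ⟨i, hit, y, hyV, rfl⟩ := Set.mem_iUnion₂.1 (ht hx)
  exact Set.mem_biUnion hit ⟨y, ⟨hyV, hfK i hx⟩, rfl⟩

theorem exists_ne_zero_inner_eq_zero {𝕜 E : Type*} [RCLike 𝕜] [NormedAddCommGroup E]
    [InnerProductSpace 𝕜 E] (hE : 1 < Module.rank 𝕜 E) (x : E) :
    ∃ w : E, w ≠ 0 ∧ inner 𝕜 x w = 0 := by
  have hspan : (𝕜 ∙ x) ≠ ⊤ := by
    intro htop
    have hrank := rank_span_le (R := 𝕜) {x}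
    rw [htop, rank_top, Cardinal.mk_singleton] at hrank
    exact hE.not_ge hrank
  obtain ⟨w, hw, hw0⟩ :=
    Submodule.exists_mem_ne_zero_of_ne_bot (mt Submodule.orthogonal_eq_bot_iff.1 hspan)
  exact ⟨w, hw0, Submodule.mem_orthogonal_singleton_iff_inner_right.1 hw⟩

theorem exists_norm_eq_one_span_singleton_eq (𝕜 : Type*) {E : Type*} [RCLike 𝕜]
    [NormedAddCommGroup E] [NormedSpace 𝕜 E] {w : E} (hw : w ≠ 0) :
    ∃ v : E, ‖v‖ = 1 ∧ (𝕜 ∙ v) = 𝕜 ∙ w :=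
  ⟨(‖w‖⁻¹ : 𝕜) • w, norm_smul_inv_norm hw,
    Submodule.span_singleton_smul_eq (by simpa using hw) w⟩

section Reflection

variable {E : Type*} [NormedAddCommGroup E] [InnerProductSpace ℝ E]

theorem exists_norm_eq_one_reflection_eq (hE : 1 < Module.rank ℝ E) {x y : E} (h : ‖x‖ = ‖y‖) :
    ∃ v : E, ‖v‖ = 1 ∧ (ℝ ∙ v)ᗮ.reflection x = y := by
  obtain ⟨w, hw, hxy⟩ : ∃ w : E, w ≠ 0 ∧ (ℝ ∙ w)ᗮ.reflection x = y := by
    obtain rfl | hne := eq_or_ne x y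
    · obtain ⟨w, hw, hxw⟩ := exists_ne_zero_inner_eq_zero hE x
      exact ⟨w, hw, Submodule.reflection_mem_subspace_eq_self
        (Submodule.mem_orthogonal_singleton_iff_inner_left.2 hxw)⟩
    · exact ⟨x - y, sub_ne_zero.2 hne, Submodule.reflection_sub h⟩
  obtain ⟨v, hv, hspan⟩ := exists_norm_eq_one_span_singleton_eq ℝ hw
  exact ⟨v, hv, by simpa only [hspan] using hxy⟩

theorem stmt11_general (hE : 1 < Module.finrank ℝ E) {r : ℝ} {V : Set E} (hV : IsOpen V)
    (hne : (V ∩ sphere 0 r).Nonempty) :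
    ∃ (m : ℕ) (v : Fin m → E), (∀ i, ‖v i‖ = 1) ∧
      sphere 0 r ⊆ ⋃ i, (ℝ ∙ v i)ᗮ.reflection '' (V ∩ sphere 0 r) := by
  have : FiniteDimensional ℝ E := .of_finrank_pos (zero_lt_one.trans hE)
  obtain ⟨p, hpV, hp⟩ := hne
  have htrans : ∀ x ∈ sphere (0 : E) r,
      ∃ v : {v : E // ‖v‖ = 1}, (ℝ ∙ (v : E))ᗮ.reflection p = x := fun x hx ↦ by
    have hpx : ‖p‖ = ‖x‖ := by rw [mem_sphere_zero_iff_norm.1 hp, mem_sphere_zero_iff_norm.1 hx]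
    obtain ⟨v, hv, hvx⟩ := exists_norm_eq_one_reflection_eq (Module.lt_rank_of_lt_finrank hE) hpx
    exact ⟨⟨v, hv⟩, hvx⟩
  obtain ⟨t, ht⟩ := exists_finset_subset_iUnion_image_inter (isCompact_sphere 0 r) hV hpV
    (fun v : {v : E // ‖v‖ = 1} ↦ (ℝ ∙ (v : E))ᗮ.reflection.toHomeomorph.isOpenMap)
    (fun v ↦ by simp) htrans
  refine ⟨t.card, fun i ↦ t.equivFin.symm i, fun i ↦ (t.equivFin.symm i).1.2, ?_⟩
  rwa [t.equivFin.symm.surjective.iUnion_comp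
    fun v : t ↦ (ℝ ∙ (v : E))ᗮ.reflection '' (V ∩ sphere 0 r), Set.iUnion_subtype]

end Reflection

theorem reflHyp_eq_reflection {n : ℕ} {v : EuclideanSpace ℝ (Fin n)} (hv : ‖v‖ = 1) :
    reflHyp v = (ℝ ∙ v)ᗮ.reflection := by
  ext1 x
  rw [Submodule.reflection_orthogonal_apply, Submodule.reflection_singleton_apply, reflHyp, hv,
    real_inner_comm]
  module

/-- Any nonempty relatively open subset `U` of the sphere `rS^{n-1}` admits finitely many
unit vectors `v_1, …, v_m` whose reflected copies `σ_{v_i}(U)` cover the whole sphere. -/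
theorem stmt11 (n : ℕ) (hn : 2 ≤ n) (r : ℝ) (hr : 0 < r)
    (U : Set (EuclideanSpace ℝ (Fin n))) (hUne : U.Nonempty)
    (hUopen : ∃ V : Set (EuclideanSpace ℝ (Fin n)),
      IsOpen V ∧ U = V ∩ sphere (0 : EuclideanSpace ℝ (Fin n)) r) :
    ∃ (m : ℕ) (v : Fin m → EuclideanSpace ℝ (Fin n)), (∀ i, ‖v i‖ = 1) ∧
      sphere (0 : EuclideanSpace ℝ (Fin n)) r ⊆ ⋃ i, reflHyp (v i) '' U := by
  obtain ⟨V, hV, rfl⟩ := hUopen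
  obtain ⟨m, v, hv, hcover⟩ := stmt11_general (hn.trans_eq finrank_euclideanSpace_fin.symm) hV hUne
  exact ⟨m, v, hv, by simpa only [reflHyp_eq_reflection, hv] using hcover⟩
end
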